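/- (One-step recurrence for SHB, Theorem B.1 / restated Theorem H.1 of Sebbouh et al.) Suppose (η_k)_{k≥0} is a non-increasing sequence with η_0 = η and 0 < η_k < 1/(2L) for all k. Define λ_k := ((1 − 2ηL)/(η_k μ))·(1 − (1 − η_k μ)^k), A_k := ‖w_k − w* + λ_k (w_k − w_{k−1})‖², E_k := A_k + 2 η_k λ_k (f(w_{k−1}) − f(w*)), and run SHB with α_k := η_k/(1 + λ_{k+1}) and β_k := λ_k (1 − η_k μ)/(1 + λ_{k+1}). Then for every k, E[E_{k+1}] ≤ (1 − η_k μ) E[E_k] + 2 L κ ζ² η_k² σ², where ζ = sqrt((n − b)/((n − 1) b)) and the expectation is over the random mini-batches. -/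

import Mathlib

open scoped BigOperators RealInnerProductSpace
open Finset

noncomputable section

/-- Iterates of a stochastic process driven by one fresh random draw per iteration:
`procRun step s0 T bs` is the state after `T` steps, where the `k`-th step uses
the random draw `bs k`. -/
def procRun {S B : Type*} (step : ℕ → S → B → S) (s0 : S) :
    (T : ℕ) → (Fin T → B) → S
  | 0, _ => s0
  | T + 1, bs => step T (procRun step s0 T fun i => bs i.castSucc) (bs (Fin.last T))

/-- Expectation of a functional of the first `T` i.i.d. uniform draws from a finite type. -/
def expVal {B : Type*} [Fintype B] (T : ℕ) (g : (Fin T → B) → ℝ) : ℝ :=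
  (∑ bs : Fin T → B, g bs) / (Fintype.card B : ℝ) ^ T

abbrev Vec (d : ℕ) := EuclideanSpace ℝ (Fin d)

/-- Mini-batches: subsets of `{1, …, n}` of cardinality `b`. -/
abbrev Batch (n b : ℕ) := {s : Finset (Fin n) // s.card = b}

/-!
A heavy-ball step with the weights `α = η / (1 + λ')` and `β = λ (1 - η μ) / (1 + λ')` is a
gradient step of size `η` for the extrapolated point `w + λ (w - w₋₁)`, started from the convex
combination `(1 - η μ) (w + λ (w - w₋₁)) + η μ w`. Jensen's inequality for the squared norm
contracts the extrapolated point at rate `1 - η μ` up to an error `η μ ‖w - w*‖²`, which strong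
convexity pays for; convexity turns the momentum part of the linear term into function values; and
the second moment of the mini-batch gradient is at most `2 L (f w - f w*) + 2 L ζ² σ²`. The
function values that remain are absorbed, since `η' λ' + L η² ≤ η (1 + λ (1 - η μ))`.
-/

section UniformMean

variable {ι E : Type*}

/-- The mean of `x` over the finite set `s`, with value `0` when `s` is empty. `Finset.expect` would
require a `ℚ≥0`-module structure, which a real vector space does not carry as an instance. -/
def uniformMean [AddCommGroup E] [Module ℝ E] (s : Finset ι) (x : ι → E) : E :=
  (#s : ℝ)⁻¹ • ∑ i ∈ s, x i

theorem uniformMean_const [AddCommGroup E] [Module ℝ E] {s : Finset ι} (hs : s.Nonempty) (a : E) :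
    uniformMean s (fun _ => a) = a := by
  have hcard : (#s : ℝ) ≠ 0 := Nat.cast_ne_zero.mpr hs.card_ne_zero
  rw [uniformMean, sum_const, ← Nat.cast_smul_eq_nsmul ℝ, inv_smul_smul₀ hcard]

theorem uniformMean_add [AddCommGroup E] [Module ℝ E] (s : Finset ι) (x y : ι → E) :
    uniformMean s (fun i => x i + y i) = uniformMean s x + uniformMean s y := by
  simp only [uniformMean, sum_add_distrib, smul_add]

theorem uniformMean_smul [AddCommGroup E] [Module ℝ E] (s : Finset ι) (c : ℝ) (x : ι → E) :
    uniformMean s (fun i => c • x i) = c • uniformMean s x := by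
  simp only [uniformMean, ← smul_sum, smul_comm c]

theorem uniformMean_congr [AddCommGroup E] [Module ℝ E] {s : Finset ι} {x y : ι → E}
    (h : ∀ i ∈ s, x i = y i) : uniformMean s x = uniformMean s y := by
  rw [uniformMean, uniformMean, sum_congr rfl h]

theorem uniformMean_mono {s : Finset ι} {x y : ι → ℝ} (h : ∀ i ∈ s, x i ≤ y i) :
    uniformMean s x ≤ uniformMean s y :=
  smul_le_smul_of_nonneg_left (sum_le_sum h) (by positivity)

theorem uniformMean_mul_add_const {s : Finset ι} (hs : s.Nonempty) (x : ι → ℝ) (r c : ℝ) :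
    uniformMean s (fun i => r * x i + c) = r * uniformMean s x + c := by
  rw [uniformMean_add, uniformMean_const hs]
  exact congrArg (· + c) (uniformMean_smul s r x)

theorem inner_uniformMean_left [NormedAddCommGroup E] [InnerProductSpace ℝ E] (s : Finset ι)
    (x : ι → E) (a : E) : ⟪uniformMean s x, a⟫ = uniformMean s (fun i => ⟪x i, a⟫) := by
  simp only [uniformMean, real_inner_smul_left, sum_inner, smul_eq_mul]

theorem uniformMean_univ_subtype_card [Fintype ι] [AddCommGroup E] [Module ℝ E] (b : ℕ)
    (φ : Finset ι → E) :
    uniformMean univ (fun S : {S : Finset ι // #S = b} => φ S) =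
      uniformMean (powersetCard b univ) φ := by
  have hmem : ∀ S : Finset ι, S ∈ powersetCard b univ ↔ #S = b := fun S => mem_powersetCard_univ
  rw [uniformMean, uniformMean, sum_subtype _ hmem, card_univ, Fintype.card_of_subtype _ hmem]

theorem uniformMean_norm_sub_smul_sq [NormedAddCommGroup E] [InnerProductSpace ℝ E]
    {s : Finset ι} (hs : s.Nonempty) (X : ι → E) (a : E) (η : ℝ) :
    uniformMean s (fun i => ‖a - η • X i‖ ^ 2) =
      ‖a‖ ^ 2 - 2 * η * ⟪uniformMean s X, a⟫ + η ^ 2 * uniformMean s (fun i => ‖X i‖ ^ 2) := by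
  have hexp : ∀ i, ‖a - η • X i‖ ^ 2 =
      ‖a‖ ^ 2 + ((-2 * η) • ⟪X i, a⟫ + η ^ 2 • ‖X i‖ ^ 2) := fun i => by
    rw [norm_sub_sq_real, real_inner_smul_right, real_inner_comm, norm_smul, mul_pow,
      Real.norm_eq_abs, sq_abs, smul_eq_mul, smul_eq_mul]
    ring
  simp only [hexp, uniformMean_add, uniformMean_smul, uniformMean_const hs, inner_uniformMean_left]
  simp only [smul_eq_mul]
  ring

end UniformMean

section SamplingWithoutReplacement

variable {ι κ E : Type*}

theorem card_filter_subset_powersetCard_mul_choose [DecidableEq ι] {s T : Finset ι} (hT : T ⊆ s)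
    (b : ℕ) : #{S ∈ powersetCard b s | T ⊆ S} * (#s).choose #T = (#s).choose b * b.choose #T := by
  rcases le_or_gt #T b with h | h
  · rw [card_filter_powersetCard_subset T s b hT h, Nat.choose_mul h, mul_comm]
  · rw [Nat.choose_eq_zero_of_lt h, mul_zero, filter_false_of_mem, card_empty, zero_mul]
    intro S hS hTS
    exact absurd (card_le_card hTS) (by rw [(mem_powersetCard.mp hS).2]; exact not_le.mpr h)

theorem choose_nsmul_sum_powersetCard_sum_filter_subset [DecidableEq ι] {M : Type*}
    [AddCommMonoid M] {s : Finset ι} {u : Finset κ} {T : κ → Finset ι} {t : ℕ}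
    (hT : ∀ j ∈ u, T j ⊆ s) (ht : ∀ j ∈ u, #(T j) = t) (b : ℕ) (φ : κ → M) :
    (#s).choose t • ∑ S ∈ powersetCard b s, ∑ j ∈ u with T j ⊆ S, φ j =
      ((#s).choose b * b.choose t) • ∑ j ∈ u, φ j := by
  have hswap : ∑ S ∈ powersetCard b s, ∑ j ∈ u with T j ⊆ S, φ j =
      ∑ j ∈ u, ∑ _S ∈ powersetCard b s with T j ⊆ _S, φ j :=
    sum_comm' fun S j => by simp only [mem_filter]; tauto
  rw [hswap, smul_sum, smul_sum]
  refine sum_congr rfl fun j hj => ?_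
  rw [sum_const, ← mul_nsmul, ← ht j hj, card_filter_subset_powersetCard_mul_choose (hT j hj)]

theorem uniformMean_powersetCard_uniformMean [AddCommGroup E] [Module ℝ E] {s : Finset ι} {b : ℕ}
    (hb : 0 < b) (hbs : b ≤ #s) (x : ι → E) :
    uniformMean (powersetCard b s) (fun S => uniformMean S x) = uniformMean s x := by
  classical
  have hfilter : ∀ S ∈ powersetCard b s, {i ∈ s | {i} ⊆ S} = S := fun S hS => by
    simp only [singleton_subset_iff, filter_mem_eq_inter]
    exact inter_eq_right.mpr (mem_powersetCard.mp hS).1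
  have hcount : (#s : ℝ) • ∑ S ∈ powersetCard b s, ∑ i ∈ S, x i =
      ((#s).choose b * b : ℝ) • ∑ i ∈ s, x i := by
    have h := choose_nsmul_sum_powersetCard_sum_filter_subset (s := s) (u := s) (T := fun i => {i})
      (fun i hi => singleton_subset_iff.mpr hi) (fun i _ => card_singleton i) b x
    rw [sum_congr rfl fun S hS => by rw [hfilter S hS], Nat.choose_one_right, Nat.choose_one_right]
      at h
    exact_mod_cast h
  have hs0 : (#s : ℝ) ≠ 0 := Nat.cast_ne_zero.mpr (by omega)
  have hb0 : (b : ℝ) ≠ 0 := Nat.cast_ne_zero.mpr hb.ne'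
  have hc0 : ((#s).choose b : ℝ) ≠ 0 := Nat.cast_ne_zero.mpr (Nat.choose_pos hbs).ne'
  have hmean : ∀ S ∈ powersetCard b s, uniformMean S x = (b : ℝ)⁻¹ • ∑ i ∈ S, x i := fun S hS => by
    rw [uniformMean, (mem_powersetCard.mp hS).2]
  rw [uniformMean_congr hmean, uniformMean_smul, uniformMean, card_powersetCard, uniformMean,
    eq_inv_smul_iff₀ hs0, smul_comm, smul_comm (#s : ℝ), hcount, mul_smul,
    inv_smul_smul₀ hc0, inv_smul_smul₀ hb0]

variable [NormedAddCommGroup E] [InnerProductSpace ℝ E]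

theorem norm_sum_sq_eq_sum_add_sum_offDiag (s : Finset ι) (x : ι → E) :
    ‖∑ i ∈ s, x i‖ ^ 2 = ∑ i ∈ s, ‖x i‖ ^ 2 + ∑ p ∈ s.offDiag, ⟪x p.1, x p.2⟫ := by
  classical
  have hinner : ‖∑ i ∈ s, x i‖ ^ 2 = ∑ p ∈ s ×ˢ s, ⟪x p.1, x p.2⟫ := by
    simp only [← real_inner_self_eq_norm_sq, sum_inner, inner_sum, sum_product_right]
  rw [hinner, ← diag_union_offDiag, sum_union (disjoint_diag_offDiag s)]
  simp only [sum_diag, real_inner_self_eq_norm_sq]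

theorem mul_sum_powersetCard_sum_offDiag (s : Finset ι) (b : ℕ) (c : ι × ι → ℝ) :
    (#s * (#s - 1) : ℝ) * ∑ S ∈ powersetCard b s, ∑ p ∈ S.offDiag, c p =
      (#s).choose b * (b * (b - 1)) * ∑ p ∈ s.offDiag, c p := by
  classical
  have hfilter : ∀ S ∈ powersetCard b s, {p ∈ s.offDiag | {p.1, p.2} ⊆ S} = S.offDiag :=
    fun S hS => by
      have hSs := (mem_powersetCard.mp hS).1
      ext p
      simp only [mem_filter, mem_offDiag, insert_subset_iff, singleton_subset_iff]
      exact ⟨fun h => ⟨h.2.1, h.2.2, h.1.2.2⟩,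
        fun h => ⟨⟨hSs h.1, hSs h.2.1, h.2.2⟩, h.1, h.2.1⟩⟩
  have h := choose_nsmul_sum_powersetCard_sum_filter_subset (s := s) (u := s.offDiag)
    (T := fun p => {p.1, p.2})
    (fun p hp => by
      rw [mem_offDiag] at hp
      exact insert_subset hp.1 (singleton_subset_iff.mpr hp.2.1))
    (fun p hp => card_pair (mem_offDiag.mp hp).2.2) b c
  rw [sum_congr rfl fun S hS => by rw [hfilter S hS], nsmul_eq_mul, nsmul_eq_mul, Nat.cast_mul,
    Nat.cast_choose_two, Nat.cast_choose_two] at h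
  linear_combination 2 * h

/-- The variance of the mean of a mini-batch of size `b`, drawn without replacement from `n` points,
relative to the variance of a single draw: the `ζ²` of the paper. For `n = 1` or `b = 0` it is the
junk value `0` of a division by `0`. -/
def batchVarianceFactor (n b : ℕ) : ℝ := (n - b) / ((n - 1) * b)

theorem batchVarianceFactor_nonneg {n b : ℕ} (hb : 0 < b) (hbn : b ≤ n) :
    0 ≤ batchVarianceFactor n b := by
  have hb' : (1 : ℝ) ≤ b := by exact_mod_cast hb
  have hbn' : (b : ℝ) ≤ n := by exact_mod_cast hbn
  exact div_nonneg (by linarith) (mul_nonneg (by linarith) (by linarith))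

theorem batchVarianceFactor_le_one {n b : ℕ} (hb : 0 < b) (hbn : b ≤ n) :
    batchVarianceFactor n b ≤ 1 := by
  have hb' : (1 : ℝ) ≤ b := by exact_mod_cast hb
  have hbn' : (b : ℝ) ≤ n := by exact_mod_cast hbn
  exact div_le_one_of_le₀ (by nlinarith) (mul_nonneg (by linarith) (by linarith))

theorem uniformMean_powersetCard_norm_sq {s : Finset ι} {b : ℕ} (hs : 2 ≤ #s) (hb : 0 < b)
    (hbs : b ≤ #s) (x : ι → E) :
    uniformMean (powersetCard b s) (fun S => ‖uniformMean S x‖ ^ 2) =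
      (1 - batchVarianceFactor #s b) * ‖uniformMean s x‖ ^ 2 +
        batchVarianceFactor #s b * uniformMean s (fun i => ‖x i‖ ^ 2) := by
  classical
  have hs1 : (#s : ℝ) - 1 ≠ 0 := by
    have : (2 : ℝ) ≤ #s := by exact_mod_cast hs
    linarith
  have hs0 : (#s : ℝ) ≠ 0 := Nat.cast_ne_zero.mpr (by omega)
  have hb0 : (b : ℝ) ≠ 0 := Nat.cast_ne_zero.mpr hb.ne'
  have hc0 : ((#s).choose b : ℝ) ≠ 0 := Nat.cast_ne_zero.mpr (Nat.choose_pos hbs).ne'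
  have hsq : ∀ S : Finset ι, ‖uniformMean S x‖ ^ 2 = (#S : ℝ)⁻¹ * uniformMean S (‖x ·‖ ^ 2) +
      (#S : ℝ)⁻¹ ^ 2 * ∑ p ∈ S.offDiag, ⟪x p.1, x p.2⟫ := fun S => by
    rw [uniformMean, norm_smul, mul_pow, norm_sum_sq_eq_sum_add_sum_offDiag, Real.norm_eq_abs,
      sq_abs, uniformMean, smul_eq_mul]
    ring
  have hpairs : uniformMean (powersetCard b s) (fun S => ∑ p ∈ S.offDiag, ⟪x p.1, x p.2⟫) =
      b * (b - 1) / (#s * (#s - 1)) * ∑ p ∈ s.offDiag, ⟪x p.1, x p.2⟫ := by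
    have h := mul_sum_powersetCard_sum_offDiag s b (fun p => ⟪x p.1, x p.2⟫)
    rw [uniformMean, card_powersetCard, smul_eq_mul]
    field_simp
    linear_combination h
  calc uniformMean (powersetCard b s) (fun S => ‖uniformMean S x‖ ^ 2)
      = uniformMean (powersetCard b s) (fun S => (b : ℝ)⁻¹ • uniformMean S (‖x ·‖ ^ 2) +
          (b : ℝ)⁻¹ ^ 2 • ∑ p ∈ S.offDiag, ⟪x p.1, x p.2⟫) := by
        refine uniformMean_congr fun S hS => ?_
        rw [hsq, (mem_powersetCard.mp hS).2, smul_eq_mul, smul_eq_mul]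
    _ = (b : ℝ)⁻¹ * uniformMean s (‖x ·‖ ^ 2) + (b : ℝ)⁻¹ ^ 2 *
          (b * (b - 1) / (#s * (#s - 1)) * ∑ p ∈ s.offDiag, ⟪x p.1, x p.2⟫) := by
        rw [uniformMean_add, uniformMean_smul, uniformMean_smul,
          uniformMean_powersetCard_uniformMean hb hbs, hpairs, smul_eq_mul, smul_eq_mul]
    _ = _ := by
        rw [hsq s, batchVarianceFactor]
        field_simp
        ring

end SamplingWithoutReplacement

section RandomProcess

variable {S B : Type*} [Fintype B]

theorem expVal_eq_uniformMean (T : ℕ) (G : (Fin T → B) → ℝ) :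
    expVal T G = uniformMean univ G := by
  rw [expVal, uniformMean, smul_eq_mul, inv_mul_eq_div, card_univ, Fintype.card_fun,
    Fintype.card_fin, Nat.cast_pow]

theorem expVal_succ (T : ℕ) (G : (Fin (T + 1) → B) → ℝ) :
    expVal (T + 1) G =
      expVal T (fun bs => uniformMean univ (fun x => G (Fin.snoc (α := fun _ => B) bs x))) := by
  have hsplit : ∑ bs, G bs = ∑ bs : Fin T → B, ∑ x, G (Fin.snoc (α := fun _ => B) bs x) := by
    rw [← (Fin.snocEquiv fun _ : Fin (T + 1) => B).sum_comp, Fintype.sum_prod_type, sum_comm]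
    rfl
  simp only [expVal, uniformMean, card_univ, smul_eq_mul, ← mul_sum, hsplit]
  rw [pow_succ', ← div_div, inv_mul_eq_div]

theorem expVal_procRun_succ_le [Nonempty B] {step : ℕ → S → B → S} {V V' : S → ℝ} {T : ℕ}
    {r c : ℝ} (h : ∀ s, uniformMean univ (fun x => V' (step T s x)) ≤ r * V s + c) (s0 : S) :
    expVal (T + 1) (fun bs => V' (procRun step s0 (T + 1) bs)) ≤
      r * expVal T (fun bs => V (procRun step s0 T bs)) + c := by
  simp only [expVal_succ, procRun, Fin.snoc_castSucc, Fin.snoc_last]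
  rw [expVal_eq_uniformMean, expVal_eq_uniformMean, ← uniformMean_mul_add_const univ_nonempty]
  exact uniformMean_mono fun bs _ => h _

end RandomProcess

section SmoothConvex

variable {ι E : Type*} [NormedAddCommGroup E] [InnerProductSpace ℝ E]

/-- `L`-smoothness of `f` with gradient field `g`, in the form of the quadratic upper bound. -/
def IsLSmooth (L : ℝ) (f : E → ℝ) (g : E → E) : Prop :=
  ∀ v w, f v ≤ f w + ⟪g w, v - w⟫ + L / 2 * ‖v - w‖ ^ 2

theorem isLSmooth_uniformMean {t : Finset ι} (ht : t.Nonempty) {L : ℝ} {f : ι → E → ℝ}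
    {g : ι → E → E} (h : ∀ i ∈ t, IsLSmooth L (f i) (g i)) :
    IsLSmooth L (fun w => uniformMean t (f · w)) (fun w => uniformMean t (g · w)) := fun v w => by
  refine (uniformMean_mono fun i hi => h i hi v w).trans_eq ?_
  rw [uniformMean_add, uniformMean_add, uniformMean_const ht, inner_uniformMean_left]

theorem IsLSmooth.norm_sq_le {L : ℝ} (hL : 0 < L) {f : E → ℝ} {g : E → E}
    (h : IsLSmooth L f g) {m : ℝ} (hm : ∀ v, m ≤ f v) (w : E) :
    ‖g w‖ ^ 2 ≤ 2 * L * (f w - m) := by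
  have hdescent : m ≤ f w - ‖g w‖ ^ 2 / (2 * L) := by
    calc m ≤ f (w - L⁻¹ • g w) := hm _
      _ ≤ f w + ⟪g w, w - L⁻¹ • g w - w⟫ + L / 2 * ‖w - L⁻¹ • g w - w‖ ^ 2 := h _ w
      _ = f w - ‖g w‖ ^ 2 / (2 * L) := by
        rw [sub_sub_cancel_left, norm_neg, inner_neg_right, real_inner_smul_right,
          real_inner_self_eq_norm_sq, norm_smul, mul_pow, Real.norm_eq_abs, sq_abs]
        field_simp
        ring
  have hdiv : ‖g w‖ ^ 2 / (2 * L) ≤ f w - m := by linarith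
  rwa [div_le_iff₀' (by positivity)] at hdiv

theorem convexOn_uniformMean {t : Finset ι} {s : Set E} (hs : Convex ℝ s) {f : ι → E → ℝ}
    (hf : ∀ i ∈ t, ConvexOn ℝ s (f i)) : ConvexOn ℝ s (fun w => uniformMean t (f · w)) := by
  refine ⟨hs, fun x hx y hy a c ha hc hac => ?_⟩
  refine (uniformMean_mono fun i hi => (hf i hi).2 hx hy ha hc hac).trans_eq ?_
  rw [uniformMean_add, uniformMean_smul, uniformMean_smul]

theorem norm_add_smul_sq_le_of_mem_Icc {r : ℝ} (h0 : 0 ≤ r) (h1 : r ≤ 1) (l : ℝ) (a v : E) :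
    ‖a + (l * r) • v‖ ^ 2 ≤ r * ‖a + l • v‖ ^ 2 + (1 - r) * ‖a‖ ^ 2 := by
  have hconv : ConvexOn ℝ Set.univ (fun x : E => ‖x‖ ^ 2) :=
    convexOn_univ_norm.pow (fun _ _ => norm_nonneg _) 2
  have hcomb : a + (l * r) • v = r • (a + l • v) + (1 - r) • a := by module
  rw [hcomb]
  exact hconv.2 trivial trivial h0 (sub_nonneg.mpr h1) (by ring)

variable [CompleteSpace E]

theorem hasGradientAt_uniformMean {t : Finset ι} {f : ι → E → ℝ} {g : ι → E} {w : E}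
    (h : ∀ i ∈ t, HasGradientAt (f i) (g i) w) :
    HasGradientAt (fun w => uniformMean t (f · w)) (uniformMean t g) w := by
  have hsum := HasFDerivAt.fun_sum fun i hi => (h i hi).hasFDerivAt
  rw [hasGradientAt_iff_hasFDerivAt, uniformMean, map_smulₛₗ, map_sum]
  exact hsum.const_smul (#t : ℝ)⁻¹

theorem add_inner_le_of_convexOn_of_hasGradientAt {f : E → ℝ} {G w : E}
    (hf : ConvexOn ℝ Set.univ f) (hG : HasGradientAt f G w) (v : E) :
    f w + ⟪G, v - w⟫ ≤ f v := by
  have hline : ConvexOn ℝ Set.univ (f ∘ AffineMap.lineMap (k := ℝ) w v) := by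
    simpa only [Set.preimage_univ] using hf.comp_affineMap (AffineMap.lineMap (k := ℝ) w v)
  have hderiv : HasDerivAt (f ∘ AffineMap.lineMap (k := ℝ) w v) ⟪G, v - w⟫ 0 := by
    have hG' : HasGradientAt f G (AffineMap.lineMap (k := ℝ) w v 0) := by
      rwa [AffineMap.lineMap_apply_zero]
    exact hG'.hasFDerivAt.comp_hasDerivAt 0 AffineMap.hasDerivAt_lineMap
  have hslope := hline.le_slope_of_hasDerivAt trivial trivial zero_lt_one hderiv
  rw [slope_def_field, Function.comp_apply, Function.comp_apply, AffineMap.lineMap_apply_one,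
    AffineMap.lineMap_apply_zero, sub_zero, div_one] at hslope
  linarith

end SmoothConvex

section AveragingWeight

/-- The averaging parameter `λ_k` of the stochastic heavy ball method with step sizes `η`. -/
def averagingWeight (L μ : ℝ) (η : ℕ → ℝ) (k : ℕ) : ℝ :=
  (1 - 2 * η 0 * L) / (η k * μ) * (1 - (1 - η k * μ) ^ k)

variable {L μ : ℝ} {η : ℕ → ℝ} {k : ℕ}

theorem averagingWeight_nonneg (hμ : 0 < μ) (hη : 0 < η k) (hη0 : 2 * η 0 * L ≤ 1)
    (hημ : η k * μ ≤ 1) : 0 ≤ averagingWeight L μ η k := by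
  have hpos : 0 < η k * μ := mul_pos hη hμ
  have hpow : (1 - η k * μ) ^ k ≤ 1 := pow_le_one₀ (by linarith) (by linarith)
  exact mul_nonneg (div_nonneg (by linarith) hpos.le) (by linarith)

theorem mul_averagingWeight (hη : η k ≠ 0) :
    η k * averagingWeight L μ η k = (1 - 2 * η 0 * L) / μ * (1 - (1 - η k * μ) ^ k) := by
  rw [averagingWeight]
  field_simp

theorem mul_averagingWeight_succ_add_le (hL : 0 ≤ L) (hμ : 0 < μ) (hη : Antitone η)
    (hη_pos : ∀ j, 0 < η j) (hη0 : 2 * η 0 * L ≤ 1) (hημ : η k * μ ≤ 1) :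
    η (k + 1) * averagingWeight L μ η (k + 1) + L * η k ^ 2 ≤
      η k * (1 + averagingWeight L μ η k * (1 - η k * μ)) := by
  have hc : 0 ≤ (1 - 2 * η 0 * L) / μ := div_nonneg (by linarith) hμ.le
  have hdecr : η (k + 1) * μ ≤ η k * μ := mul_le_mul_of_nonneg_right (hη k.le_succ) hμ.le
  have hpow : (1 - η k * μ) ^ (k + 1) ≤ (1 - η (k + 1) * μ) ^ (k + 1) :=
    pow_le_pow_left₀ (by linarith) (by linarith) _
  have hLη : L * η k ^ 2 ≤ 2 * η 0 * L * η k := by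
    have hLηk : 0 ≤ L * η k := mul_nonneg hL (hη_pos k).le
    nlinarith [mul_le_mul_of_nonneg_left (hη k.zero_le) hLηk, mul_nonneg hLηk (hη_pos 0).le]
  calc η (k + 1) * averagingWeight L μ η (k + 1) + L * η k ^ 2
      ≤ (1 - 2 * η 0 * L) / μ * (1 - (1 - η k * μ) ^ (k + 1)) + 2 * η 0 * L * η k := by
        rw [mul_averagingWeight (hη_pos _).ne']
        linarith [mul_le_mul_of_nonneg_left hpow hc]
    _ = η k + (1 - 2 * η 0 * L) / μ * (1 - (1 - η k * μ) ^ k) * (1 - η k * μ) := by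
        field_simp
        ring
    _ = η k * (1 + averagingWeight L μ η k * (1 - η k * μ)) := by
        rw [← mul_averagingWeight (hη_pos k).ne']
        ring

end AveragingWeight

section HeavyBall

variable {ι κ E : Type*} [NormedAddCommGroup E]

/-- The heavy-ball update of the state `(w_k, w_{k-1})` with step size `α`, momentum `β` and
gradient estimate `G`. -/
def heavyBallStep [Module ℝ E] (α β : ℝ) (G : E) (s : E × E) : E × E :=
  (s.1 - α • G + β • (s.1 - s.2), s.1)

/-- The Lyapunov function `‖w_k - w* + λ (w_k - w_{k-1})‖² + 2 η λ (F w_{k-1} - F w*)` of the state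
`(w_k, w_{k-1})`. -/
def heavyBallEnergy [Module ℝ E] (F : E → ℝ) (wstar : E) (η l : ℝ) (s : E × E) : ℝ :=
  ‖s.1 - wstar + l • (s.1 - s.2)‖ ^ 2 + 2 * η * l * (F s.2 - F wstar)

/-- The mini-batch heavy-ball iteration in its averaging parametrization: the step size is
`η_k / (1 + λ_{k+1})` and the momentum `λ_k (1 - η_k μ) / (1 + λ_{k+1})`. -/
def shbStep [Module ℝ E] (L μ : ℝ) (η : ℕ → ℝ) (g : ι → E → E) (k : ℕ) (s : E × E)
    (S : Finset ι) : E × E :=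
  heavyBallStep (η k / (1 + averagingWeight L μ η (k + 1)))
    (averagingWeight L μ η k * (1 - η k * μ) / (1 + averagingWeight L μ η (k + 1)))
    (uniformMean S (g · s.1)) s

theorem heavyBallEnergy_heavyBallStep [Module ℝ E] (F : E → ℝ) (wstar G : E) (s : E × E)
    (η η' m : ℝ) {l' : ℝ} (hl' : 1 + l' ≠ 0) :
    heavyBallEnergy F wstar η' l' (heavyBallStep (η / (1 + l')) (m / (1 + l')) G s) =
      ‖s.1 - wstar + m • (s.1 - s.2) - η • G‖ ^ 2 + 2 * η' * l' * (F s.1 - F wstar) := by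
  obtain ⟨α, rfl⟩ : ∃ α, η = (1 + l') * α := ⟨η / (1 + l'), (mul_div_cancel₀ _ hl').symm⟩
  obtain ⟨β, rfl⟩ : ∃ β, m = (1 + l') * β := ⟨m / (1 + l'), (mul_div_cancel₀ _ hl').symm⟩
  rw [heavyBallEnergy, heavyBallStep, mul_div_cancel_left₀ _ hl', mul_div_cancel_left₀ _ hl']
  congr 3
  module

variable [InnerProductSpace ℝ E]

theorem norm_sq_sub_inner_add_le_heavyBallEnergy {F : E → ℝ} {wstar G : E} {s : E × E}
    {L μ η η' l l' M c : ℝ} (hmin : F wstar ≤ F s.1) (hconv : F s.1 + ⟪G, s.2 - s.1⟫ ≤ F s.2)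
    (hqsc : F s.1 + ⟪G, wstar - s.1⟫ + μ / 2 * ‖wstar - s.1‖ ^ 2 ≤ F wstar)
    (hM : M ≤ 2 * L * (F s.1 - F wstar) + c) (hη : 0 ≤ η) (hμ : 0 ≤ μ) (hημ : η * μ ≤ 1)
    (hl : 0 ≤ l) (hll' : η' * l' + L * η ^ 2 ≤ η * (1 + l * (1 - η * μ))) :
    ‖s.1 - wstar + (l * (1 - η * μ)) • (s.1 - s.2)‖ ^ 2
        - 2 * η * ⟪G, s.1 - wstar + (l * (1 - η * μ)) • (s.1 - s.2)⟫ + η ^ 2 * M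
        + 2 * η' * l' * (F s.1 - F wstar) ≤
      (1 - η * μ) * heavyBallEnergy F wstar η l s + η ^ 2 * c := by
  rw [← neg_sub s.1, inner_neg_right] at hconv
  rw [← neg_sub s.1, inner_neg_right, norm_neg] at hqsc
  rw [heavyBallEnergy, inner_add_right, real_inner_smul_right]
  set r := 1 - η * μ with hr
  have hr0 : 0 ≤ r := by linarith
  have hjensen := norm_add_smul_sq_le_of_mem_Icc hr0 (by linarith [mul_nonneg hη hμ]) l
    (s.1 - wstar) (s.1 - s.2)
  have hdist : 2 * η * (F s.1 - F wstar + μ / 2 * ‖s.1 - wstar‖ ^ 2) ≤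
      2 * η * ⟪G, s.1 - wstar⟫ := by gcongr; linarith
  have hmomentum : 2 * η * (l * r) * (F s.1 - F s.2) ≤ 2 * η * (l * r) * ⟪G, s.1 - s.2⟫ := by
    gcongr; linarith
  have hnoise : η ^ 2 * M ≤ η ^ 2 * (2 * L * (F s.1 - F wstar) + c) := by gcongr
  have hweight := mul_le_mul_of_nonneg_right hll' (show 0 ≤ 2 * (F s.1 - F wstar) by linarith)
  rw [show 1 - r = η * μ by rw [hr]; ring] at hjensen
  linarith

theorem uniformMean_heavyBallEnergy_heavyBallStep_le {t : Finset κ} (ht : t.Nonempty) {X : κ → E}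
    {F : E → ℝ} {wstar : E} {s : E × E} {L μ η η' l l' c : ℝ} (hmin : F wstar ≤ F s.1)
    (hconv : F s.1 + ⟪uniformMean t X, s.2 - s.1⟫ ≤ F s.2)
    (hqsc : F s.1 + ⟪uniformMean t X, wstar - s.1⟫ + μ / 2 * ‖wstar - s.1‖ ^ 2 ≤ F wstar)
    (hX : uniformMean t (fun i => ‖X i‖ ^ 2) ≤ 2 * L * (F s.1 - F wstar) + c)
    (hη : 0 ≤ η) (hμ : 0 ≤ μ) (hημ : η * μ ≤ 1) (hl : 0 ≤ l) (hl' : 0 ≤ l')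
    (hll' : η' * l' + L * η ^ 2 ≤ η * (1 + l * (1 - η * μ))) :
    uniformMean t (fun i => heavyBallEnergy F wstar η' l'
        (heavyBallStep (η / (1 + l')) (l * (1 - η * μ) / (1 + l')) (X i) s)) ≤
      (1 - η * μ) * heavyBallEnergy F wstar η l s + η ^ 2 * c := by
  simp only [heavyBallEnergy_heavyBallStep F wstar _ s η η' _ (by positivity : 1 + l' ≠ 0),
    uniformMean_add, uniformMean_const ht, uniformMean_norm_sub_smul_sq ht]
  exact norm_sq_sub_inner_add_le_heavyBallEnergy hmin hconv hqsc hX hη hμ hημ hl hll'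

theorem uniformMean_powersetCard_norm_sq_le {t : Finset ι} {b : ℕ} (ht : 2 ≤ #t) (hb : 0 < b)
    (hbt : b ≤ #t) {L : ℝ} (hL : 0 < L) {f : ι → E → ℝ} {g : ι → E → E}
    (hsmooth : ∀ i ∈ t, IsLSmooth L (f i) (g i)) {m : ι → ℝ} (hm : ∀ i ∈ t, ∀ w, m i ≤ f i w)
    {wstar : E} (hmin : ∀ w, uniformMean t (f · wstar) ≤ uniformMean t (f · w)) (w : E) :
    uniformMean (powersetCard b t) (fun S => ‖uniformMean S (g · w)‖ ^ 2) ≤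
      2 * L * (uniformMean t (f · w) - uniformMean t (f · wstar)) +
        2 * L * batchVarianceFactor #t b * uniformMean t (fun i => f i wstar - m i) := by
  have ht0 : t.Nonempty := card_pos.mp (by omega)
  have hfull : ‖uniformMean t (g · w)‖ ^ 2 ≤
      2 * L * (uniformMean t (f · w) - uniformMean t (f · wstar)) :=
    IsLSmooth.norm_sq_le hL (isLSmooth_uniformMean ht0 hsmooth) hmin w
  have hsingle : uniformMean t (fun i => ‖g i w‖ ^ 2) ≤
      2 * L * (uniformMean t (f · w) - uniformMean t (f · wstar)) +
        2 * L * uniformMean t (fun i => f i wstar - m i) := by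
    refine (uniformMean_mono fun i hi =>
      IsLSmooth.norm_sq_le hL (hsmooth i hi) (hm i hi) w).trans_eq ?_
    simp only [uniformMean, smul_eq_mul, ← mul_sum, sum_sub_distrib]
    ring
  rw [uniformMean_powersetCard_norm_sq ht hb hbt]
  have hz0 := batchVarianceFactor_nonneg hb hbt
  have hz1 := sub_nonneg.mpr (batchVarianceFactor_le_one hb hbt)
  linarith [mul_le_mul_of_nonneg_left hfull hz1, mul_le_mul_of_nonneg_left hsingle hz0]

end HeavyBall

theorem shb_one_step_recurrence_general {E : Type*} [NormedAddCommGroup E] [InnerProductSpace ℝ E]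
    [CompleteSpace E] {n b : ℕ} (hn : 2 ≤ n) (hb : 0 < b) (hbn : b ≤ n)
    {L μ : ℝ} (hμ : 0 < μ) (hμL : μ ≤ L) {f : Fin n → E → ℝ} {g : Fin n → E → E}
    (hdiff : ∀ i w, HasGradientAt (f i) (g i w) w) (hsmooth : ∀ i, IsLSmooth L (f i) (g i))
    {fstar : Fin n → ℝ} (hfstar : ∀ i, IsGLB (Set.range (f i)) (fstar i))
    {F : E → ℝ} (hF : F = fun w => uniformMean univ (f · w)) (hconv : ConvexOn ℝ Set.univ F)
    {wstar : E} (hmin : ∀ w, F wstar ≤ F w)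
    (hqsc : ∀ w, F w + ⟪uniformMean univ (g · w), wstar - w⟫ + μ / 2 * ‖wstar - w‖ ^ 2 ≤ F wstar)
    {η : ℕ → ℝ} (hη : Antitone η) (hη_pos : ∀ k, 0 < η k) (hη0 : η 0 ≤ 1 / (2 * L))
    (s0 : E × E) (k : ℕ) :
    expVal (k + 1) (fun bs : Fin (k + 1) → Batch n b =>
        heavyBallEnergy F wstar (η (k + 1)) (averagingWeight L μ η (k + 1))
          (procRun (fun j s S => shbStep L μ η g j s S.1) s0 (k + 1) bs)) ≤
      (1 - η k * μ) * expVal k (fun bs : Fin k → Batch n b =>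
          heavyBallEnergy F wstar (η k) (averagingWeight L μ η k)
            (procRun (fun j s S => shbStep L μ η g j s S.1) s0 k bs)) +
        η k ^ 2 * (2 * L * batchVarianceFactor n b *
          uniformMean univ (fun i => f i wstar - fstar i)) := by
  have hL : 0 < L := hμ.trans_le hμL
  have hη0L : 2 * η 0 * L ≤ 1 := by
    rw [le_div_iff₀ (by positivity)] at hη0
    linarith
  have hημ : ∀ j, η j * μ ≤ 1 := fun j => by
    have hη0' : η j * μ ≤ η 0 * L := mul_le_mul (hη j.zero_le) hμL hμ.le (hη_pos 0).le
    linarith [mul_pos (hη_pos j) hμ]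
  have hlam : ∀ j, 0 ≤ averagingWeight L μ η j := fun j =>
    averagingWeight_nonneg hμ (hη_pos j) hη0L (hημ j)
  have hcard : #(univ : Finset (Fin n)) = n := card_fin n
  obtain ⟨S, hS⟩ : (powersetCard b (univ : Finset (Fin n))).Nonempty :=
    powersetCard_nonempty.mpr (hbn.trans_eq hcard.symm)
  have : Nonempty (Batch n b) := ⟨⟨S, mem_powersetCard_univ.mp hS⟩⟩
  refine expVal_procRun_succ_le (fun s => ?_) s0
  have hmean : uniformMean (powersetCard b univ) (fun S => uniformMean S (g · s.1)) =
      uniformMean univ (g · s.1) :=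
    uniformMean_powersetCard_uniformMean hb (hbn.trans_eq hcard.symm) _
  have hgrad : HasGradientAt F (uniformMean univ (g · s.1)) s.1 :=
    hF ▸ hasGradientAt_uniformMean fun i _ => hdiff i s.1
  have hsecond := uniformMean_powersetCard_norm_sq_le (t := univ) (hn.trans_eq hcard.symm) hb
    (hbn.trans_eq hcard.symm) hL (fun i _ => hsmooth i)
    (fun i _ w => (hfstar i).1 (Set.mem_range_self w)) (by simpa only [hF] using hmin) s.1
  rw [hcard] at hsecond
  rw [uniformMean_univ_subtype_card b (fun S =>
    heavyBallEnergy F wstar (η (k + 1)) (averagingWeight L μ η (k + 1)) (shbStep L μ η g k s S))]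
  refine uniformMean_heavyBallEnergy_heavyBallStep_le ⟨S, hS⟩ (hmin s.1) ?_ ?_
    (by simpa only [hF] using hsecond) (hη_pos k).le hμ.le (hημ k) (hlam k) (hlam (k + 1))
    (mul_averagingWeight_succ_add_le hL.le hμ hη hη_pos hη0L (hημ k))
  · exact hmean ▸ add_inner_le_of_convexOn_of_hasGradientAt hconv hgrad s.2
  · exact hmean ▸ hqsc s.1

/-- **Theorem (one-step recurrence for SHB)**: for smooth, strongly convex finite-sum
minimization, the Lyapunov quantity `E_k` of SHB with the averaging parameterization
satisfies `E[E_{k+1}] ≤ (1 − η_k μ) E[E_k] + 2Lκζ²η_k²σ²`. -/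
theorem shb_one_step_recurrence
    (d n b : ℕ) (hd : 0 < d) (hn : 2 ≤ n) (hb : 0 < b) (hbn : b ≤ n)
    (L μ : ℝ) (hL : 0 < L) (hμpos : 0 < μ) (hμL : μ ≤ L)
    (f : Fin n → Vec d → ℝ) (g : Fin n → Vec d → Vec d)
    -- each `f i` is differentiable with gradient `g i`
    (hdiff : ∀ i w, HasGradientAt (f i) (g i w) w)
    -- each `f i` is convex
    (hconv : ∀ i, ConvexOn ℝ Set.univ (f i))
    -- each `f i` is `L`-smooth
    (hsmooth : ∀ i v w, f i v ≤ f i w + ⟪g i w, v - w⟫ + L / 2 * ‖v - w‖ ^ 2)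
    -- each `f i` has a finite infimum `fstar i`
    (fstar : Fin n → ℝ) (hfstar : ∀ i, IsGLB (Set.range (f i)) (fstar i))
    (F : Vec d → ℝ) (hF : F = fun w => (n : ℝ)⁻¹ * ∑ i, f i w)
    (gF : Vec d → Vec d) (hgF : gF = fun w => (n : ℝ)⁻¹ • ∑ i, g i w)
    -- `F` is `μ`-strongly convex
    (hsc : ∀ v w, F w + ⟪gF w, v - w⟫ + μ / 2 * ‖v - w‖ ^ 2 ≤ F v)
    -- `wstar` minimizes `F`
    (wstar : Vec d) (hmin : ∀ w, F wstar ≤ F w)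
    (w0 : Vec d)
    -- step-size sequence: non-increasing, positive, below `1/(2L)`
    (η : ℕ → ℝ) (hη_anti : ∀ k, η (k + 1) ≤ η k)
    (hη_pos : ∀ k, 0 < η k) (hη_ub : ∀ k, η k < 1 / (2 * L))
    (lam α β : ℕ → ℝ)
    (hlam : ∀ k, lam k = (1 - 2 * η 0 * L) / (η k * μ) * (1 - (1 - η k * μ) ^ k))
    (hα : ∀ k, α k = η k / (1 + lam (k + 1)))
    (hβ : ∀ k, β k = lam k * (1 - η k * μ) / (1 + lam (k + 1)))
    -- the SHB update (state = `(w_k, w_{k−1})`)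
    (step : ℕ → Vec d × Vec d → Batch n b → Vec d × Vec d)
    (hstep : ∀ k s S, step k s S =
      (s.1 - α k • ((b : ℝ)⁻¹ • ∑ i ∈ S.1, g i s.1) + β k • (s.1 - s.2), s.1))
    -- the Lyapunov function `E_k = A_k + 2 η_k λ_k (f(w_{k−1}) − f(w*))`
    (Ecal : ℕ → Vec d × Vec d → ℝ)
    (hEcal : ∀ k s, Ecal k s =
      ‖s.1 - wstar + lam k • (s.1 - s.2)‖ ^ 2 + 2 * η k * lam k * (F s.2 - F wstar))
    (κ ζ σ2 : ℝ) (hκ : κ = L / μ)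
    (hζ : ζ = Real.sqrt (((n : ℝ) - b) / (((n : ℝ) - 1) * b)))
    (hσ2 : σ2 = (n : ℝ)⁻¹ * ∑ i, (f i wstar - fstar i)) :
    ∀ k : ℕ,
      expVal (k + 1) (fun bs => Ecal (k + 1) (procRun step (w0, w0) (k + 1) bs))
        ≤ (1 - η k * μ) * expVal k (fun bs => Ecal k (procRun step (w0, w0) k bs))
          + 2 * L * κ * ζ ^ 2 * η k ^ 2 * σ2 := by
  intro k
  have hmean : F = fun w => uniformMean univ (f · w) := by simp [hF, uniformMean]
  have hσ : σ2 = uniformMean univ (fun i => f i wstar - fstar i) := by simp [hσ2, uniformMean]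
  have hσ0 : 0 ≤ σ2 := by
    rw [hσ2]
    exact mul_nonneg (by positivity)
      (sum_nonneg fun i _ => sub_nonneg.mpr ((hfstar i).1 (Set.mem_range_self _)))
  have hstep' : step = fun j s S => shbStep L μ η g j s S.1 := by
    funext j s S
    simp only [hstep, hα, hβ, hlam, shbStep, heavyBallStep, uniformMean, averagingWeight, S.2]
  have hEcal' : ∀ j, Ecal j = heavyBallEnergy F wstar (η j) (averagingWeight L μ η j) :=
    fun j => funext fun s => by rw [hEcal, hlam, heavyBallEnergy, averagingWeight]
  have hζ2 : ζ ^ 2 = batchVarianceFactor n b := by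
    rw [hζ, ← batchVarianceFactor, Real.sq_sqrt (batchVarianceFactor_nonneg hb hbn)]
  have hκ1 : 1 ≤ κ := by rwa [hκ, one_le_div hμpos]
  have hrec := shb_one_step_recurrence_general hn hb hbn hμpos hμL hdiff hsmooth hfstar hmean
    (hmean ▸ convexOn_uniformMean convex_univ fun i _ => hconv i) hmin
    (fun w => by simpa [hgF, uniformMean] using hsc wstar w) (antitone_nat_of_succ_le hη_anti)
    hη_pos (hη_ub 0).le (w0, w0) k
  rw [← hσ, ← hζ2, ← hstep'] at hrec
  simp only [hEcal']
  refine hrec.trans (add_le_add_right ?_ _)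
  calc η k ^ 2 * (2 * L * ζ ^ 2 * σ2) ≤ κ * (η k ^ 2 * (2 * L * ζ ^ 2 * σ2)) :=
        le_mul_of_one_le_left (by positivity) hκ1
    _ = 2 * L * κ * ζ ^ 2 * η k ^ 2 * σ2 := by ring
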